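/- arXiv:2510.25576 — 3 statements merged into one kernel-verified Lean document; each statement's English description precedes it below -/
import Mathlib

section
/- For every x₀ > 0 and L > 3x₀, the critical curve γ = (x,y) satisfies: |γ̇(s)| = 1 for all s ∈ [0,2L] (arc-length parametrization); γ is an admissible vertically symmetric curve; ẏ(0) = ẏ(2L) = 0; the curvature of γ equals H(s) = π/(σ√(κ² − (s−L)²)) for all s; and the Euler–Lagrange equation 2 + (d²/ds²)(H(s)⁻²) = λ = 2L/(L+x₀) holds for all s ∈ [0,2L]. -/
open Real Set

/-- `σ = π √(x₀/(L+x₀))` -/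
noncomputable def sig (x0 L : ℝ) : ℝ := π * Real.sqrt (x0 / (L + x0))

/-- `κ = L / sin σ` -/
noncomputable def kap (x0 L : ℝ) : ℝ := L / Real.sin (sig x0 L)

/-- the curvature of the critical curve: `H(s) = π/(σ √(κ² − (s−L)²))` -/
noncomputable def Hc (x0 L s : ℝ) : ℝ :=
  π / (sig x0 L * Real.sqrt (kap x0 L ^ 2 - (s - L) ^ 2))

/-- first component of the critical curve -/
noncomputable def xc (x0 L s : ℝ) : ℝ :=
  -(kap x0 L / 2) *
    ((sig x0 L / (π + sig x0 L)) *
        Real.sin (((π + sig x0 L) / sig x0 L) * Real.arcsin ((s - L) / kap x0 L)) +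
      (sig x0 L / (π - sig x0 L)) *
        Real.sin (((π - sig x0 L) / sig x0 L) * Real.arcsin ((s - L) / kap x0 L)))

/-- second component of the critical curve -/
noncomputable def yc (x0 L s : ℝ) : ℝ :=
  kap x0 L / 2 *
    ((sig x0 L / (π + sig x0 L)) *
        Real.cos (((π + sig x0 L) / sig x0 L) * Real.arcsin ((s - L) / kap x0 L)) +
      (sig x0 L / (π - sig x0 L)) *
        Real.cos (((π - sig x0 L) / sig x0 L) * Real.arcsin ((s - L) / kap x0 L))) +
  π * x0 / (sig x0 L * Real.tan (sig x0 L))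

/-- curvature `⟨ċ, c̈^⊥⟩/|ċ|³` of the plane curve `c = (u, v)`,
where `(a₁,a₂)^⊥ = (a₂,−a₁)`. -/
noncomputable def curv (u v : ℝ → ℝ) (s : ℝ) : ℝ :=
  (deriv u s * deriv (deriv v) s - deriv v s * deriv (deriv u) s) /
    Real.sqrt (deriv u s ^ 2 + deriv v s ^ 2) ^ 3

/-- admissible curve with boundary points `(x₀,0)`, `(−x₀,0)` in the upper half plane -/
def Admissible (x0 L : ℝ) (u v : ℝ → ℝ) : Prop :=
  ContDiffOn ℝ (⊤ : ℕ∞) u (Set.Icc 0 (2 * L)) ∧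
  ContDiffOn ℝ (⊤ : ℕ∞) v (Set.Icc 0 (2 * L)) ∧
  (∀ s ∈ Set.Icc (0:ℝ) (2 * L), 0 < Real.sqrt (deriv u s ^ 2 + deriv v s ^ 2)) ∧
  Set.InjOn (fun s => (u s, v s)) (Set.Icc 0 (2 * L)) ∧
  (∀ s ∈ Set.Icc (0:ℝ) (2 * L), 0 < curv u v s) ∧
  u 0 = x0 ∧ v 0 = 0 ∧ u (2 * L) = -x0 ∧ v (2 * L) = 0 ∧
  (∀ s ∈ Set.Ioo (0:ℝ) (2 * L), 0 < v s)

/-- vertical symmetry of the curve `(u, v)` on `[0, 2L]` -/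
def VertSym (L : ℝ) (u v : ℝ → ℝ) : Prop :=
  ∀ s ∈ Set.Icc (0:ℝ) (2 * L), u (2 * L - s) = -u s ∧ v (2 * L - s) = v s

/-!
Up to a constant factor, the tangent angle of the critical curve is the angle
`θ = arcsin ((s - L) / κ)`: since `κ cos θ · dθ = ds`, the product formulas for `sin` and `cos`
show that `γ̇ = -(cos φ, sin φ)` with `φ = (π / σ) θ`. Hence `γ` has unit speed and its curvature is
`φ̇ = H`. Moreover `φ` increases strictly from `-π` through `0` (at `s = L`) to `π`, so on the first
half of the curve `y` increases strictly while `x` first increases and then decreases to `0`; with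
the vertical symmetry this yields positivity of `y` and injectivity. Finally
`H⁻² = (σ / π)² (κ² - (s - L)²)` is quadratic in `s`, with second derivative
`-2 (σ / π)² = -2 x₀ / (L + x₀)`.
-/

open Filter Topology

section TangentAngle

variable {u v φ : ℝ → ℝ} {a b s k : ℝ}

lemma deriv_sq_add_deriv_sq_of_angle (hu : HasDerivAt u (-cos (φ s)) s)
    (hv : HasDerivAt v (-sin (φ s)) s) : deriv u s ^ 2 + deriv v s ^ 2 = 1 := by
  rw [hu.deriv, hv.deriv, neg_sq, neg_sq, cos_sq_add_sin_sq]

lemma curv_eq_of_angle (hu : ∀ᶠ t in 𝓝 s, HasDerivAt u (-cos (φ t)) t)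
    (hv : ∀ᶠ t in 𝓝 s, HasDerivAt v (-sin (φ t)) t) (hφ : HasDerivAt φ k s) :
    curv u v s = k := by
  have hu' : deriv u =ᶠ[𝓝 s] fun t ↦ -cos (φ t) := hu.mono fun _ h ↦ h.deriv
  have hv' : deriv v =ᶠ[𝓝 s] fun t ↦ -sin (φ t) := hv.mono fun _ h ↦ h.deriv
  have hu'' : deriv (deriv u) s = sin (φ s) * k := by
    rw [hu'.deriv_eq, hφ.cos.fun_neg.deriv, neg_mul, neg_neg]
  have hv'' : deriv (deriv v) s = -(cos (φ s) * k) := by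
    rw [hv'.deriv_eq, hφ.sin.fun_neg.deriv]
  rw [curv, deriv_sq_add_deriv_sq_of_angle hu.self_of_nhds hv.self_of_nhds, hu'', hv'',
    hu'.eq_of_nhds, hv'.eq_of_nhds, sqrt_one, one_pow, div_one]
  linear_combination k * cos_sq_add_sin_sq (φ s)

lemma strictMonoOn_Icc_of_hasDerivAt_pos {f f' : ℝ → ℝ}
    (hf : ∀ s ∈ Icc a b, HasDerivAt f (f' s) s) (hf' : ∀ s ∈ Ioo a b, 0 < f' s) :
    StrictMonoOn f (Icc a b) := by
  rw [← interior_Icc] at hf'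
  exact strictMonoOn_of_hasDerivWithinAt_pos (convex_Icc a b) (HasDerivAt.continuousOn hf)
    (fun s hs ↦ (hf s (interior_subset hs)).hasDerivWithinAt) hf'

lemma strictAntiOn_Icc_of_hasDerivAt_neg {f f' : ℝ → ℝ}
    (hf : ∀ s ∈ Icc a b, HasDerivAt f (f' s) s) (hf' : ∀ s ∈ Ioo a b, f' s < 0) :
    StrictAntiOn f (Icc a b) := by
  rw [← interior_Icc] at hf'
  exact strictAntiOn_of_hasDerivWithinAt_neg (convex_Icc a b) (HasDerivAt.continuousOn hf)
    (fun s hs ↦ (hf s (interior_subset hs)).hasDerivWithinAt) hf'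

lemma strictMonoOn_of_angle_mem_Ioo (hv : ∀ s ∈ Icc a b, HasDerivAt v (-sin (φ s)) s)
    (hφ : ∀ s ∈ Ioo a b, φ s ∈ Ioo (-π) 0) : StrictMonoOn v (Icc a b) :=
  strictMonoOn_Icc_of_hasDerivAt_pos hv fun s hs ↦
    neg_pos.2 (sin_neg_of_neg_of_neg_pi_lt (hφ s hs).2 (hφ s hs).1)

-- Before the angle reaches `-π / 2` the function `u` increases, afterwards it decreases.
lemma min_lt_of_angle_strictMonoOn (hu : ∀ s ∈ Icc a b, HasDerivAt u (-cos (φ s)) s)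
    (hφ : StrictMonoOn φ (Icc a b)) (ha : -π ≤ φ a) (hb : φ b ≤ 0) (hs : s ∈ Ioo a b) :
    min (u a) (u b) < u s := by
  obtain ⟨has, hsb⟩ := hs
  have hs : s ∈ Icc a b := ⟨has.le, hsb.le⟩
  have hab : a ≤ b := (has.trans hsb).le
  rcases le_total (φ s) (-(π / 2)) with hle | hge
  · have hmono : StrictMonoOn u (Icc a s) := by
      refine strictMonoOn_Icc_of_hasDerivAt_pos
        (fun t ht ↦ hu t (Icc_subset_Icc_right hsb.le ht)) fun t ht ↦ ?_
      have htab : t ∈ Icc a b := ⟨ht.1.le, (ht.2.trans hsb).le⟩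
      have hat := hφ (left_mem_Icc.2 hab) htab ht.1
      have hts := hφ htab hs ht.2
      rw [← cos_neg, neg_pos]
      exact cos_neg_of_pi_div_two_lt_of_lt (by linarith) (by linarith [pi_pos])
    exact min_lt_of_left_lt (hmono (left_mem_Icc.2 has.le) (right_mem_Icc.2 has.le) has)
  · have hanti : StrictAntiOn u (Icc s b) := by
      refine strictAntiOn_Icc_of_hasDerivAt_neg
        (fun t ht ↦ hu t (Icc_subset_Icc_left has.le ht)) fun t ht ↦ ?_
      have htab : t ∈ Icc a b := ⟨(has.trans ht.1).le, ht.2.le⟩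
      have hst := hφ hs htab ht.1
      have htb := hφ htab (right_mem_Icc.2 hab) ht.2
      exact neg_neg_of_pos (cos_pos_of_mem_Ioo ⟨by linarith, by linarith [pi_pos]⟩)
    exact min_lt_of_right_lt (hanti (left_mem_Icc.2 hsb.le) (right_mem_Icc.2 hsb.le) hsb)

end TangentAngle

namespace VertSym

variable {L s : ℝ} {u v : ℝ → ℝ}

lemma fst_pos_iff (h : VertSym L u v) (hu : ∀ s ∈ Ico 0 L, 0 < u s) (hs : s ∈ Icc 0 (2 * L)) :
    0 < u s ↔ s < L := by
  refine ⟨fun hpos ↦ ?_, fun hlt ↦ hu s ⟨hs.1, hlt⟩⟩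
  by_contra! hLs
  have hrefl : u (2 * L - s) = -u s := (h s hs).1
  rcases hLs.eq_or_lt with rfl | hlt
  · rw [two_mul, add_sub_cancel_right] at hrefl
    linarith
  · linarith [hu (2 * L - s) ⟨by linarith [hs.2], by linarith⟩]

lemma injOn (h : VertSym L u v) (hu : ∀ s ∈ Ico 0 L, 0 < u s) (hv : InjOn v (Icc 0 L)) :
    InjOn (fun s ↦ (u s, v s)) (Icc 0 (2 * L)) := by
  intro s hs t ht hst
  obtain ⟨hust, hvst⟩ := Prod.mk.inj hst
  have hside : s < L ↔ t < L := by rw [← h.fst_pos_iff hu hs, hust, h.fst_pos_iff hu ht]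
  rcases lt_or_ge s L with hsL | hLs
  · exact hv ⟨hs.1, hsL.le⟩ ⟨ht.1, (hside.1 hsL).le⟩ hvst
  · have hLt : L ≤ t := not_lt.1 (hside.not.1 hLs.not_gt)
    rw [← (h s hs).2, ← (h t ht).2] at hvst
    have := hv ⟨by linarith [hs.2], by linarith⟩ ⟨by linarith [ht.2], by linarith⟩ hvst
    linarith

lemma snd_pos (h : VertSym L u v) (hv : ∀ s ∈ Ioc 0 L, 0 < v s) (hs : s ∈ Ioo 0 (2 * L)) :
    0 < v s := by
  rcases le_total s L with hsL | hLs
  · exact hv s ⟨hs.1, hsL⟩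
  · rw [← (h s (Ioo_subset_Icc_self hs)).2]
    exact hv _ ⟨by linarith [hs.2], by linarith⟩

end VertSym

section ArcsinAngle

variable {κ c s : ℝ}

/-- The angle `θ ∈ [-π/2, π/2]` with `κ sin θ = s - c`, for `|s - c| ≤ κ`. With `κ = kap x0 L` and
`c = L` it is the angle in terms of which the critical curve is an explicit trigonometric sum. -/
noncomputable def arcsinAngle (κ c s : ℝ) : ℝ := arcsin ((s - c) / κ)

lemma sub_div_mem_Ioo (hs : s ∈ Ioo (c - κ) (c + κ)) : (s - c) / κ ∈ Ioo (-1) 1 := by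
  have hκ : 0 < κ := by linarith [hs.1, hs.2]
  rw [mem_Ioo, lt_div_iff₀ hκ, div_lt_iff₀ hκ]
  constructor <;> linarith [hs.1, hs.2]

lemma mul_cos_arcsinAngle (hκ : 0 < κ) :
    κ * cos (arcsinAngle κ c s) = √(κ ^ 2 - (s - c) ^ 2) := by
  have hfactor : κ ^ 2 - (s - c) ^ 2 = κ ^ 2 * (1 - ((s - c) / κ) ^ 2) := by field_simp
  rw [arcsinAngle, cos_arcsin, hfactor, sqrt_mul (sq_nonneg κ), sqrt_sq hκ.le]

lemma sqrt_sq_sub_sq_pos (hs : s ∈ Ioo (c - κ) (c + κ)) : 0 < √(κ ^ 2 - (s - c) ^ 2) :=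
  sqrt_pos.2 (sub_pos.2 (sq_lt_sq' (by linarith [hs.1]) (by linarith [hs.2])))

lemma hasDerivAt_arcsinAngle (hs : s ∈ Ioo (c - κ) (c + κ)) :
    HasDerivAt (arcsinAngle κ c) (√(κ ^ 2 - (s - c) ^ 2))⁻¹ s := by
  have hκ : 0 < κ := by linarith [hs.1, hs.2]
  have hdiv := sub_div_mem_Ioo hs
  refine ((hasDerivAt_arcsin hdiv.1.ne' hdiv.2.ne).comp s
    (((hasDerivAt_id s).sub_const c).div_const κ)).congr_deriv ?_
  rw [← mul_cos_arcsinAngle hκ, arcsinAngle, cos_arcsin, one_div_mul_one_div, mul_comm, one_div]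

lemma contDiffAt_arcsinAngle {n : WithTop ℕ∞} (hs : s ∈ Ioo (c - κ) (c + κ)) :
    ContDiffAt ℝ n (arcsinAngle κ c) s := by
  have hdiv := sub_div_mem_Ioo hs
  exact (contDiffAt_arcsin hdiv.1.ne' hdiv.2.ne).comp s (by fun_prop)

lemma strictMonoOn_arcsinAngle (κ c : ℝ) :
    StrictMonoOn (arcsinAngle κ c) (Ioo (c - κ) (c + κ)) := by
  intro s hs t ht hst
  have hκ : 0 < κ := by linarith [hs.1, hs.2]
  exact strictMonoOn_arcsin (Ioo_subset_Icc_self (sub_div_mem_Ioo hs))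
    (Ioo_subset_Icc_self (sub_div_mem_Ioo ht)) (by gcongr)

lemma arcsinAngle_two_mul_sub (κ c s : ℝ) :
    arcsinAngle κ c (2 * c - s) = -arcsinAngle κ c s := by
  rw [arcsinAngle, arcsinAngle, ← arcsin_neg]
  ring_nf

lemma arcsinAngle_self (κ c : ℝ) : arcsinAngle κ c c = 0 := by
  rw [arcsinAngle, sub_self, zero_div, arcsin_zero]

end ArcsinAngle

section Primitives

variable {θ : ℝ → ℝ} {θ' κ a s : ℝ}

-- `cos ((a + 1) θ) + cos ((a - 1) θ) = 2 cos (a θ) cos θ`, and `κ cos θ` is the inverse of `dθ/ds`.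
lemma hasDerivAt_cos_mul_primitive (hθ : HasDerivAt θ θ' s) (hθ' : κ * cos (θ s) * θ' = 1)
    (ha : a + 1 ≠ 0) (ha' : a - 1 ≠ 0) :
    HasDerivAt (fun t ↦ κ / 2 * ((a + 1)⁻¹ * sin ((a + 1) * θ t) +
      (a - 1)⁻¹ * sin ((a - 1) * θ t))) (cos (a * θ s)) s := by
  refine ((((hθ.const_mul (a + 1)).sin.const_mul (a + 1)⁻¹).add
    ((hθ.const_mul (a - 1)).sin.const_mul (a - 1)⁻¹)).const_mul (κ / 2)).congr_deriv ?_
  calc _ = κ / 2 * θ' * (cos (a * θ s + θ s) + cos (a * θ s - θ s)) := by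
        field_simp
    _ = cos (a * θ s) := by
        rw [cos_add, cos_sub]
        linear_combination cos (a * θ s) * hθ'

lemma hasDerivAt_sin_mul_primitive (hθ : HasDerivAt θ θ' s) (hθ' : κ * cos (θ s) * θ' = 1)
    (ha : a + 1 ≠ 0) (ha' : a - 1 ≠ 0) :
    HasDerivAt (fun t ↦ κ / 2 * ((a + 1)⁻¹ * cos ((a + 1) * θ t) +
      (a - 1)⁻¹ * cos ((a - 1) * θ t))) (-sin (a * θ s)) s := by
  refine ((((hθ.const_mul (a + 1)).cos.const_mul (a + 1)⁻¹).add
    ((hθ.const_mul (a - 1)).cos.const_mul (a - 1)⁻¹)).const_mul (κ / 2)).congr_deriv ?_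
  calc _ = -(κ / 2 * θ' * (sin (a * θ s + θ s) + sin (a * θ s - θ s))) := by
        field_simp
        ring
    _ = -sin (a * θ s) := by
        rw [sin_add, sin_sub]
        linear_combination -sin (a * θ s) * hθ'

end Primitives

section Parameters

variable {x0 L : ℝ}

lemma sig_pos (hx0 : 0 < x0) (hL : 0 < L) : 0 < sig x0 L :=
  mul_pos pi_pos (sqrt_pos.2 (by positivity))

lemma sig_lt_pi_div_two (hx0 : 0 < x0) (hL : 3 * x0 < L) : sig x0 L < π / 2 := by
  have hsqrt : √(x0 / (L + x0)) < 1 / 2 := by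
    rw [sqrt_lt' (by norm_num), div_lt_iff₀ (by linarith)]
    linarith
  calc sig x0 L < π * (1 / 2) := mul_lt_mul_of_pos_left hsqrt pi_pos
    _ = π / 2 := by ring

lemma sig_sq (hx0 : 0 < x0) (hL : 0 < L) : sig x0 L ^ 2 = π ^ 2 * (x0 / (L + x0)) := by
  rw [sig, mul_pow, sq_sqrt (by positivity)]

lemma sig_sq_mul_add (hx0 : 0 < x0) (hL : 0 < L) : sig x0 L ^ 2 * (L + x0) = π ^ 2 * x0 := by
  rw [sig_sq hx0 hL]
  field_simp

lemma sin_sig_pos (hx0 : 0 < x0) (hL : 3 * x0 < L) : 0 < sin (sig x0 L) :=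
  sin_pos_of_pos_of_lt_pi (sig_pos hx0 (by linarith))
    (by linarith [sig_lt_pi_div_two hx0 hL, pi_pos])

lemma lt_kap (hx0 : 0 < x0) (hL : 3 * x0 < L) : L < kap x0 L := by
  have hσ := sig_pos hx0 (by linarith : 0 < L)
  have hsin_lt_one : sin (sig x0 L) < 1 := by
    rw [← sin_pi_div_two]
    exact sin_lt_sin_of_lt_of_le_pi_div_two (by linarith [pi_pos]) le_rfl
      (sig_lt_pi_div_two hx0 hL)
  rw [kap, lt_div_iff₀ (sin_sig_pos hx0 hL)]
  exact mul_lt_of_lt_one_right (by linarith) hsin_lt_one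

lemma div_kap (hx0 : 0 < x0) (hL : 3 * x0 < L) : L / kap x0 L = sin (sig x0 L) := by
  rw [kap, div_div_cancel₀ (by linarith)]

lemma Icc_subset_Ioo_kap (hx0 : 0 < x0) (hL : 3 * x0 < L) :
    Icc 0 (2 * L) ⊆ Ioo (L - kap x0 L) (L + kap x0 L) := by
  have := lt_kap hx0 hL
  exact Icc_subset_Ioo (by linarith) (by linarith)

end Parameters

section CriticalCurve

variable {x0 L s : ℝ}

/-- The angle `φ = (π / σ) θ` for which the critical curve has velocity `-(cos φ, sin φ)`. -/
noncomputable def tangentAngle (x0 L s : ℝ) : ℝ := π / sig x0 L * arcsinAngle (kap x0 L) L s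

lemma tangentAngle_two_mul_sub (x0 L s : ℝ) :
    tangentAngle x0 L (2 * L - s) = -tangentAngle x0 L s := by
  rw [tangentAngle, tangentAngle, arcsinAngle_two_mul_sub, mul_neg]

lemma tangentAngle_self (x0 L : ℝ) : tangentAngle x0 L L = 0 := by
  rw [tangentAngle, arcsinAngle_self, mul_zero]

lemma arcsinAngle_kap_zero (hx0 : 0 < x0) (hL : 3 * x0 < L) :
    arcsinAngle (kap x0 L) L 0 = -sig x0 L := by
  have hσ := sig_pos hx0 (by linarith : 0 < L)
  have hσ' := sig_lt_pi_div_two hx0 hL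
  rw [arcsinAngle, zero_sub, neg_div, div_kap hx0 hL, arcsin_neg,
    arcsin_sin (by linarith) hσ'.le]

lemma tangentAngle_zero (hx0 : 0 < x0) (hL : 3 * x0 < L) : tangentAngle x0 L 0 = -π := by
  have hσ := sig_pos hx0 (by linarith : 0 < L)
  rw [tangentAngle, arcsinAngle_kap_zero hx0 hL, mul_neg, div_mul_cancel₀ _ hσ.ne']

lemma strictMonoOn_tangentAngle (hx0 : 0 < x0) (hL : 3 * x0 < L) :
    StrictMonoOn (tangentAngle x0 L) (Icc 0 (2 * L)) := by
  have hσ := sig_pos hx0 (by linarith : 0 < L)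
  intro s hs t ht hst
  have hsub := Icc_subset_Ioo_kap hx0 hL
  exact mul_lt_mul_of_pos_left (strictMonoOn_arcsinAngle _ _ (hsub hs) (hsub ht) hst)
    (by positivity)

lemma hasDerivAt_tangentAngle (hs : s ∈ Ioo (L - kap x0 L) (L + kap x0 L)) :
    HasDerivAt (tangentAngle x0 L) (Hc x0 L s) s := by
  refine ((hasDerivAt_arcsinAngle hs).const_mul (π / sig x0 L)).congr_deriv ?_
  rw [Hc, ← div_div, ← div_eq_mul_inv]

lemma xc_eq (hσ : sig x0 L ≠ 0) (s : ℝ) :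
    xc x0 L s = -(kap x0 L / 2 *
      ((π / sig x0 L + 1)⁻¹ * sin ((π / sig x0 L + 1) * arcsinAngle (kap x0 L) L s) +
        (π / sig x0 L - 1)⁻¹ * sin ((π / sig x0 L - 1) * arcsinAngle (kap x0 L) L s))) := by
  rw [xc, div_add_one hσ, div_sub_one hσ, inv_div, inv_div, neg_mul]
  rfl

lemma yc_eq (hσ : sig x0 L ≠ 0) (s : ℝ) :
    yc x0 L s = kap x0 L / 2 *
      ((π / sig x0 L + 1)⁻¹ * cos ((π / sig x0 L + 1) * arcsinAngle (kap x0 L) L s) +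
        (π / sig x0 L - 1)⁻¹ * cos ((π / sig x0 L - 1) * arcsinAngle (kap x0 L) L s)) +
      π * x0 / (sig x0 L * tan (sig x0 L)) := by
  rw [yc, div_add_one hσ, div_sub_one hσ, inv_div, inv_div]
  rfl

lemma pi_div_sig_sub_one_pos (hx0 : 0 < x0) (hL : 3 * x0 < L) : 0 < π / sig x0 L - 1 := by
  rw [sub_pos, one_lt_div (sig_pos hx0 (by linarith))]
  linarith [sig_lt_pi_div_two hx0 hL, pi_pos]

lemma kap_mul_cos_arcsinAngle_mul_inv (hx0 : 0 < x0) (hL : 3 * x0 < L)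
    (hs : s ∈ Ioo (L - kap x0 L) (L + kap x0 L)) :
    kap x0 L * cos (arcsinAngle (kap x0 L) L s) * (√(kap x0 L ^ 2 - (s - L) ^ 2))⁻¹ = 1 := by
  rw [mul_cos_arcsinAngle (by linarith [lt_kap hx0 hL]),
    mul_inv_cancel₀ (sqrt_sq_sub_sq_pos hs).ne']

lemma hasDerivAt_xc (hx0 : 0 < x0) (hL : 3 * x0 < L)
    (hs : s ∈ Ioo (L - kap x0 L) (L + kap x0 L)) :
    HasDerivAt (xc x0 L) (-cos (tangentAngle x0 L s)) s := by
  have ha := pi_div_sig_sub_one_pos hx0 hL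
  rw [funext (xc_eq (sig_pos hx0 (by linarith)).ne')]
  exact (hasDerivAt_cos_mul_primitive (hasDerivAt_arcsinAngle hs)
    (kap_mul_cos_arcsinAngle_mul_inv hx0 hL hs) (by linarith) ha.ne').fun_neg

lemma hasDerivAt_yc (hx0 : 0 < x0) (hL : 3 * x0 < L)
    (hs : s ∈ Ioo (L - kap x0 L) (L + kap x0 L)) :
    HasDerivAt (yc x0 L) (-sin (tangentAngle x0 L s)) s := by
  have ha := pi_div_sig_sub_one_pos hx0 hL
  rw [funext (yc_eq (sig_pos hx0 (by linarith)).ne')]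
  exact (hasDerivAt_sin_mul_primitive (hasDerivAt_arcsinAngle hs)
    (kap_mul_cos_arcsinAngle_mul_inv hx0 hL hs) (by linarith) ha.ne').add_const _

lemma contDiffAt_xc {n : WithTop ℕ∞} (hs : s ∈ Ioo (L - kap x0 L) (L + kap x0 L)) :
    ContDiffAt ℝ n (xc x0 L) s := by
  have hθ : ContDiffAt ℝ n (fun t ↦ arcsin ((t - L) / kap x0 L)) s := contDiffAt_arcsinAngle hs
  unfold xc
  fun_prop

lemma contDiffAt_yc {n : WithTop ℕ∞} (hs : s ∈ Ioo (L - kap x0 L) (L + kap x0 L)) :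
    ContDiffAt ℝ n (yc x0 L) s := by
  have hθ : ContDiffAt ℝ n (fun t ↦ arcsin ((t - L) / kap x0 L)) s := contDiffAt_arcsinAngle hs
  unfold yc
  fun_prop

lemma xc_two_mul_sub (x0 L s : ℝ) : xc x0 L (2 * L - s) = -xc x0 L s := by
  have hθ := arcsinAngle_two_mul_sub (kap x0 L) L s
  simp only [arcsinAngle] at hθ
  simp only [xc, hθ, mul_neg, sin_neg]
  ring

lemma yc_two_mul_sub (x0 L s : ℝ) : yc x0 L (2 * L - s) = yc x0 L s := by
  have hθ := arcsinAngle_two_mul_sub (kap x0 L) L s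
  simp only [arcsinAngle] at hθ
  simp only [yc, hθ, mul_neg, cos_neg]

lemma vertSym_xc_yc (x0 L : ℝ) : VertSym L (xc x0 L) (yc x0 L) :=
  fun s _ ↦ ⟨xc_two_mul_sub x0 L s, yc_two_mul_sub x0 L s⟩

lemma xc_self (x0 L : ℝ) : xc x0 L L = 0 := by
  simp [xc]

lemma xc_zero (hx0 : 0 < x0) (hL : 3 * x0 < L) : xc x0 L 0 = x0 := by
  have hσ := sig_pos hx0 (by linarith : 0 < L)
  have hsin := sin_sig_pos hx0 hL
  have hsub : π - sig x0 L ≠ 0 := by linarith [sig_lt_pi_div_two hx0 hL, pi_pos]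
  have hadd : sig x0 L + π ≠ 0 := by positivity
  have hθ : arcsin ((0 - L) / kap x0 L) = -sig x0 L := arcsinAngle_kap_zero hx0 hL
  rw [xc, hθ, mul_neg, mul_neg, div_mul_cancel₀ _ hσ.ne', div_mul_cancel₀ _ hσ.ne', sin_neg,
    sin_neg, add_comm π, sin_add_pi, sin_pi_sub, kap]
  field_simp
  linear_combination 2 * sig_sq_mul_add hx0 (by linarith : 0 < L)

lemma yc_zero (hx0 : 0 < x0) (hL : 3 * x0 < L) : yc x0 L 0 = 0 := by
  have hσ := sig_pos hx0 (by linarith : 0 < L)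
  have hσ' := sig_lt_pi_div_two hx0 hL
  have hsin := sin_sig_pos hx0 hL
  have hsub : π - sig x0 L ≠ 0 := by linarith
  have hadd : sig x0 L + π ≠ 0 := by positivity
  have hθ : arcsin ((0 - L) / kap x0 L) = -sig x0 L := arcsinAngle_kap_zero hx0 hL
  rw [yc, hθ, mul_neg, mul_neg, div_mul_cancel₀ _ hσ.ne', div_mul_cancel₀ _ hσ.ne', cos_neg,
    cos_neg, add_comm π, cos_add_pi, cos_pi_sub, kap, tan_eq_sin_div_cos]
  field_simp
  linear_combination -2 * π * cos (sig x0 L) * sig_sq_mul_add hx0 (by linarith : 0 < L)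

lemma strictMonoOn_yc (hx0 : 0 < x0) (hL : 3 * x0 < L) : StrictMonoOn (yc x0 L) (Icc 0 L) := by
  have hsub : Icc 0 L ⊆ Icc 0 (2 * L) := Icc_subset_Icc_right (by linarith)
  have hφ := (strictMonoOn_tangentAngle hx0 hL).mono hsub
  refine strictMonoOn_of_angle_mem_Ioo
    (fun s hs ↦ hasDerivAt_yc hx0 hL (Icc_subset_Ioo_kap hx0 hL (hsub hs))) fun s hs ↦ ?_
  have hs' := Ioo_subset_Icc_self hs
  have hleft := hφ (left_mem_Icc.2 (by linarith)) hs' hs.1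
  have hright := hφ hs' (right_mem_Icc.2 (by linarith)) hs.2
  rw [tangentAngle_zero hx0 hL] at hleft
  rw [tangentAngle_self] at hright
  exact ⟨hleft, hright⟩

lemma xc_pos (hx0 : 0 < x0) (hL : 3 * x0 < L) (hs : s ∈ Ico 0 L) : 0 < xc x0 L s := by
  have hsub : Icc 0 L ⊆ Icc 0 (2 * L) := Icc_subset_Icc_right (by linarith)
  rcases hs.1.eq_or_lt with rfl | hs0
  · rwa [xc_zero hx0 hL]
  · calc 0 = min (xc x0 L 0) (xc x0 L L) := by rw [xc_zero hx0 hL, xc_self, min_eq_right hx0.le]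
      _ < xc x0 L s := min_lt_of_angle_strictMonoOn
        (fun t ht ↦ hasDerivAt_xc hx0 hL (Icc_subset_Ioo_kap hx0 hL (hsub ht)))
        ((strictMonoOn_tangentAngle hx0 hL).mono hsub) (tangentAngle_zero hx0 hL).ge
        (tangentAngle_self x0 L).le ⟨hs0, hs.2⟩

lemma yc_pos (hx0 : 0 < x0) (hL : 3 * x0 < L) (hs : s ∈ Ioc 0 L) : 0 < yc x0 L s := by
  rw [← yc_zero hx0 hL]
  exact strictMonoOn_yc hx0 hL (left_mem_Icc.2 (by linarith)) (Ioc_subset_Icc_self hs) hs.1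

lemma deriv_xc_sq_add_deriv_yc_sq (hx0 : 0 < x0) (hL : 3 * x0 < L) (hs : s ∈ Icc 0 (2 * L)) :
    deriv (xc x0 L) s ^ 2 + deriv (yc x0 L) s ^ 2 = 1 :=
  have hs' := Icc_subset_Ioo_kap hx0 hL hs
  deriv_sq_add_deriv_sq_of_angle (hasDerivAt_xc hx0 hL hs') (hasDerivAt_yc hx0 hL hs')

lemma deriv_yc_zero (hx0 : 0 < x0) (hL : 3 * x0 < L) : deriv (yc x0 L) 0 = 0 := by
  have h0 := Icc_subset_Ioo_kap hx0 hL (left_mem_Icc.2 (by linarith))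
  rw [(hasDerivAt_yc hx0 hL h0).deriv, tangentAngle_zero hx0 hL, sin_neg, sin_pi, neg_zero,
    neg_zero]

lemma deriv_yc_two_mul (hx0 : 0 < x0) (hL : 3 * x0 < L) : deriv (yc x0 L) (2 * L) = 0 := by
  have h2L := Icc_subset_Ioo_kap hx0 hL (right_mem_Icc.2 (by linarith))
  have hφ : tangentAngle x0 L (2 * L) = π := by
    rw [← sub_zero (2 * L), tangentAngle_two_mul_sub, tangentAngle_zero hx0 hL, neg_neg]
  rw [(hasDerivAt_yc hx0 hL h2L).deriv, hφ, sin_pi, neg_zero]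

lemma curv_xc_yc (hx0 : 0 < x0) (hL : 3 * x0 < L) (hs : s ∈ Icc 0 (2 * L)) :
    curv (xc x0 L) (yc x0 L) s = Hc x0 L s := by
  have hs' := Icc_subset_Ioo_kap hx0 hL hs
  have hnear := Ioo_mem_nhds hs'.1 hs'.2
  exact curv_eq_of_angle (mem_of_superset hnear fun _ ↦ hasDerivAt_xc hx0 hL)
    (mem_of_superset hnear fun _ ↦ hasDerivAt_yc hx0 hL) (hasDerivAt_tangentAngle hs')

lemma Hc_pos (hσ : 0 < sig x0 L) (hs : s ∈ Ioo (L - kap x0 L) (L + kap x0 L)) :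
    0 < Hc x0 L s :=
  div_pos pi_pos (mul_pos hσ (sqrt_sq_sub_sq_pos hs))

lemma admissible_xc_yc (hx0 : 0 < x0) (hL : 3 * x0 < L) :
    Admissible x0 L (xc x0 L) (yc x0 L) := by
  have hsub := Icc_subset_Ioo_kap hx0 hL
  have hsym := vertSym_xc_yc x0 L
  refine ⟨fun s hs ↦ (contDiffAt_xc (hsub hs)).contDiffWithinAt,
    fun s hs ↦ (contDiffAt_yc (hsub hs)).contDiffWithinAt, fun s hs ↦ ?speed,
    hsym.injOn (fun _ ↦ xc_pos hx0 hL) (strictMonoOn_yc hx0 hL).injOn, fun s hs ↦ ?curvature,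
    xc_zero hx0 hL, yc_zero hx0 hL, ?endpoint_x, ?endpoint_y,
    fun s ↦ hsym.snd_pos fun _ ↦ yc_pos hx0 hL⟩
  case speed =>
    rw [deriv_xc_sq_add_deriv_yc_sq hx0 hL hs, sqrt_one]
    exact one_pos
  case curvature =>
    rw [curv_xc_yc hx0 hL hs]
    exact Hc_pos (sig_pos hx0 (by linarith)) (hsub hs)
  case endpoint_x => rw [← sub_zero (2 * L), xc_two_mul_sub, xc_zero hx0 hL]
  case endpoint_y => rw [← sub_zero (2 * L), yc_two_mul_sub, yc_zero hx0 hL]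

end CriticalCurve

section EulerLagrange

variable {x0 L s : ℝ}

lemma inv_Hc_sq (hs : s ∈ Ioo (L - kap x0 L) (L + kap x0 L)) :
    (Hc x0 L s ^ 2)⁻¹ = (sig x0 L / π) ^ 2 * (kap x0 L ^ 2 - (s - L) ^ 2) := by
  rw [Hc, div_pow, inv_div, mul_pow, sq_sqrt (sqrt_pos.1 (sqrt_sq_sub_sq_pos hs)).le, div_pow,
    mul_div_right_comm]

lemma deriv_deriv_const_mul_const_sub_sq (a b c s : ℝ) :
    deriv (deriv fun t ↦ a * (b - (t - c) ^ 2)) s = -2 * a := by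
  have hderiv : deriv (fun t ↦ a * (b - (t - c) ^ 2)) = fun t ↦ -2 * a * (t - c) := by
    funext t
    refine ((((((hasDerivAt_id' t).sub_const c).pow 2).const_sub b).const_mul a).congr_deriv
      ?_).deriv
    ring
  rw [hderiv, (((hasDerivAt_id' s).sub_const c).const_mul (-2 * a)).deriv, mul_one]

lemma deriv_deriv_inv_Hc_sq (hs : s ∈ Ioo (L - kap x0 L) (L + kap x0 L)) :
    deriv (deriv fun t ↦ (Hc x0 L t ^ 2)⁻¹) s = -2 * (sig x0 L / π) ^ 2 := by
  have hquad : (fun t ↦ (Hc x0 L t ^ 2)⁻¹) =ᶠ[𝓝 s]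
      fun t ↦ (sig x0 L / π) ^ 2 * (kap x0 L ^ 2 - (t - L) ^ 2) :=
    mem_of_superset (Ioo_mem_nhds hs.1 hs.2) fun _ ↦ inv_Hc_sq
  rw [hquad.deriv.deriv_eq, deriv_deriv_const_mul_const_sub_sq]

lemma two_add_deriv_deriv_inv_Hc_sq (hx0 : 0 < x0) (hL : 3 * x0 < L) (hs : s ∈ Icc 0 (2 * L)) :
    2 + deriv (deriv fun t ↦ (Hc x0 L t ^ 2)⁻¹) s = 2 * L / (L + x0) := by
  have hL0 : 0 < L := by linarith
  rw [deriv_deriv_inv_Hc_sq (Icc_subset_Ioo_kap hx0 hL hs), div_pow, sig_sq hx0 hL0]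
  field_simp
  ring

end EulerLagrange

theorem statement0 (x0 L : ℝ) (hx0 : 0 < x0) (hL : 3 * x0 < L) :
    (∀ s ∈ Set.Icc (0:ℝ) (2 * L),
        deriv (xc x0 L) s ^ 2 + deriv (yc x0 L) s ^ 2 = 1) ∧
    Admissible x0 L (xc x0 L) (yc x0 L) ∧
    VertSym L (xc x0 L) (yc x0 L) ∧
    deriv (yc x0 L) 0 = 0 ∧ deriv (yc x0 L) (2 * L) = 0 ∧
    (∀ s ∈ Set.Icc (0:ℝ) (2 * L), curv (xc x0 L) (yc x0 L) s = Hc x0 L s) ∧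
    (∀ s ∈ Set.Icc (0:ℝ) (2 * L),
        2 + deriv (deriv fun t => (Hc x0 L t ^ 2)⁻¹) s = 2 * L / (L + x0)) := by
  exact ⟨fun _ ↦ deriv_xc_sq_add_deriv_yc_sq hx0 hL, admissible_xc_yc hx0 hL, vertSym_xc_yc x0 L,
    deriv_yc_zero hx0 hL, deriv_yc_two_mul hx0 hL, fun _ ↦ curv_xc_yc hx0 hL,
    fun _ ↦ two_add_deriv_deriv_inv_Hc_sq hx0 hL⟩
end

section
/- Fix x₀ > 0 and, for L > 3x₀, define A₀(x₀,L) = ((L+x₀)/(2π))·(π√(x₀/(L+x₀))/sin(π√(x₀/(L+x₀))))²·(L + (2L+x₀)·sin(2π√(x₀/(L+x₀)))/(2π√(x₀/(L+x₀)))). Then the function L ↦ A₀(x₀,L) is strictly increasing on (3x₀, ∞), its limit as L → 3x₀⁺ equals (3/2)πx₀², and consequently for every A* > (3/2)πx₀² there exists a unique L > 3x₀ with A₀(x₀,L) = A*. -/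
open Real Set Filter

/-- area enclosed by the critical configuration with boundary parameter `x₀` and half-length `L` -/
noncomputable def A0 (x0 L : ℝ) : ℝ :=
  (L + x0) / (2 * π) *
    (π * Real.sqrt (x0 / (L + x0)) / Real.sin (π * Real.sqrt (x0 / (L + x0)))) ^ 2 *
    (L + (2 * L + x0) * Real.sin (2 * π * Real.sqrt (x0 / (L + x0))) /
      (2 * π * Real.sqrt (x0 / (L + x0))))

/-!
With `a = π √(x₀ / (L + x₀))`, so that `(L + x₀) a² = π² x₀`, the double-angle formula gives
`A₀ = (π x₀ / 2) (L / sin² a + (2 L + x₀) (cot a / a))`.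
For `L ≥ 3 x₀` the angle `a` decreases with `L` inside `(0, π/2]`, where `sin² a` increases and
`cot a / a` is nonnegative and decreasing, so both summands grow with `L`. At `L = 3 x₀` the angle
is `π/2`, and dropping the cotangent term gives `A₀ ≥ (π x₀ / 2) L`, so `A₀` is unbounded.
-/

lemma strictAntiOn_cot : StrictAntiOn Real.cot (Ioo 0 π) := by
  have cot_eq_tan (t : ℝ) : Real.cot t = tan (π / 2 - t) := by
    rw [tan_pi_div_two_sub, tan_inv_eq_cot]
  intro s hs t ht hst
  rw [cot_eq_tan, cot_eq_tan]
  exact strictMonoOn_tan ⟨by linarith [ht.2], by linarith [ht.1]⟩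
    ⟨by linarith [hs.2], by linarith [hs.1]⟩ (by linarith)

lemma cot_nonneg_of_mem_Icc {t : ℝ} (ht : t ∈ Icc 0 (π / 2)) : 0 ≤ Real.cot t := by
  rw [← tan_inv_eq_cot]
  exact inv_nonneg.2 (tan_nonneg_of_nonneg_of_le_pi_div_two ht.1 ht.2)

lemma Ioc_zero_pi_div_two_subset_Ioo_zero_pi : Ioc 0 (π / 2) ⊆ Ioo 0 π :=
  Ioc_subset_Ioo_right (half_lt_self pi_pos)

lemma antitoneOn_cot_div_self : AntitoneOn (fun t ↦ Real.cot t / t) (Ioc 0 (π / 2)) := by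
  intro s hs t ht hst
  have hcot : Real.cot t ≤ Real.cot s :=
    strictAntiOn_cot.antitoneOn (Ioc_zero_pi_div_two_subset_Ioo_zero_pi hs)
      (Ioc_zero_pi_div_two_subset_Ioo_zero_pi ht) hst
  exact div_le_div₀ (cot_nonneg_of_mem_Icc (Ioc_subset_Icc_self hs)) hcot hs.1 hst

/-- The angle `π √(x₀ / (L + x₀))` through which `A0 x0 L` depends trigonometrically on `L`. -/
noncomputable def criticalAngle (x0 L : ℝ) : ℝ := π * √(x0 / (L + x0))

section

variable {x0 : ℝ}

lemma strictAntiOn_criticalAngle (hx0 : 0 < x0) :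
    StrictAntiOn (criticalAngle x0) (Ioi (-x0)) := by
  intro L hL M hM hLM
  rw [mem_Ioi] at hL hM
  have hratio : x0 / (M + x0) < x0 / (L + x0) :=
    div_lt_div_of_pos_left hx0 (by linarith) (by linarith)
  exact mul_lt_mul_of_pos_left
    (sqrt_lt_sqrt (div_nonneg hx0.le (by linarith)) hratio) pi_pos

lemma continuousOn_criticalAngle : ContinuousOn (criticalAngle x0) (Ioi (-x0)) := by
  unfold criticalAngle
  fun_prop (disch := intro L (hL : -x0 < L); linarith)

lemma criticalAngle_pos (hx0 : 0 < x0) {L : ℝ} (hL : -x0 < L) : 0 < criticalAngle x0 L :=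
  mul_pos pi_pos (sqrt_pos.2 (div_pos hx0 (by linarith)))

lemma criticalAngle_zero (hx0 : x0 ≠ 0) : criticalAngle x0 0 = π := by
  simp [criticalAngle, hx0]

lemma criticalAngle_three_mul (hx0 : x0 ≠ 0) : criticalAngle x0 (3 * x0) = π / 2 := by
  have hratio : x0 / (3 * x0 + x0) = (1 / 2) ^ 2 := by
    field_simp
    norm_num
  rw [criticalAngle, hratio, sqrt_sq (by norm_num), mul_one_div]

lemma criticalAngle_mem_Ioo (hx0 : 0 < x0) {L : ℝ} (hL : 0 < L) :
    criticalAngle x0 L ∈ Ioo 0 π := by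
  refine ⟨criticalAngle_pos hx0 (by linarith), ?_⟩
  rw [← criticalAngle_zero hx0.ne']
  exact strictAntiOn_criticalAngle hx0 (mem_Ioi.2 (by linarith)) (mem_Ioi.2 (by linarith)) hL

lemma criticalAngle_mem_Ioc (hx0 : 0 < x0) {L : ℝ} (hL : 3 * x0 ≤ L) :
    criticalAngle x0 L ∈ Ioc 0 (π / 2) := by
  refine ⟨criticalAngle_pos hx0 (by linarith), ?_⟩
  rw [← criticalAngle_three_mul hx0.ne']
  exact (strictAntiOn_criticalAngle hx0).antitoneOn (mem_Ioi.2 (by linarith))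
    (mem_Ioi.2 (by linarith)) hL

lemma sin_criticalAngle_pos (hx0 : 0 < x0) {L : ℝ} (hL : 0 < L) :
    0 < sin (criticalAngle x0 L) :=
  sin_pos_of_mem_Ioo (criticalAngle_mem_Ioo hx0 hL)

lemma add_mul_criticalAngle_sq (hx0 : 0 ≤ x0) {L : ℝ} (hL : -x0 < L) :
    (L + x0) * criticalAngle x0 L ^ 2 = π ^ 2 * x0 := by
  have hsum : 0 < L + x0 := by linarith
  rw [criticalAngle, mul_pow, sq_sqrt (by positivity)]
  field_simp

lemma A0_eq_criticalAngle (hx0 : 0 < x0) {L : ℝ} (hL : 0 < L) :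
    A0 x0 L = π * x0 / 2 * (L / sin (criticalAngle x0 L) ^ 2 +
      (2 * L + x0) * (Real.cot (criticalAngle x0 L) / criticalAngle x0 L)) := by
  have hangle : criticalAngle x0 L ≠ 0 := (criticalAngle_mem_Ioo hx0 hL).1.ne'
  have hsin : sin (criticalAngle x0 L) ≠ 0 := (sin_criticalAngle_pos hx0 hL).ne'
  have hprefactor : (L + x0) / (2 * π) * (criticalAngle x0 L / sin (criticalAngle x0 L)) ^ 2 =
      π * x0 / 2 / sin (criticalAngle x0 L) ^ 2 := by
    rw [div_pow, div_mul_div_comm, add_mul_criticalAngle_sq hx0.le (by linarith)]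
    field_simp
  rw [A0, mul_assoc 2 π, ← criticalAngle, hprefactor, sin_two_mul, Real.cot_eq_cos_div_sin]
  field_simp

lemma strictMonoOn_div_sin_criticalAngle_sq (hx0 : 0 < x0) :
    StrictMonoOn (fun L ↦ L / sin (criticalAngle x0 L) ^ 2) (Ici (3 * x0)) := by
  intro L hL M hM hLM
  rw [mem_Ici] at hL hM
  have hangle : criticalAngle x0 M < criticalAngle x0 L :=
    strictAntiOn_criticalAngle hx0 (mem_Ioi.2 (by linarith)) (mem_Ioi.2 (by linarith)) hLM
  have hsin_pos : 0 < sin (criticalAngle x0 M) := sin_criticalAngle_pos hx0 (by linarith)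
  have hsin : sin (criticalAngle x0 M) < sin (criticalAngle x0 L) :=
    sin_lt_sin_of_lt_of_le_pi_div_two
      (by linarith [pi_pos, (criticalAngle_mem_Ioc hx0 hM).1])
      (criticalAngle_mem_Ioc hx0 hL).2 hangle
  exact div_lt_div₀ hLM (by gcongr) (by linarith) (by positivity)

lemma cot_div_criticalAngle_nonneg (hx0 : 0 < x0) {L : ℝ} (hL : 3 * x0 ≤ L) :
    0 ≤ Real.cot (criticalAngle x0 L) / criticalAngle x0 L :=
  have hangle := Ioc_subset_Icc_self (criticalAngle_mem_Ioc hx0 hL)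
  div_nonneg (cot_nonneg_of_mem_Icc hangle) hangle.1

lemma monotoneOn_mul_cot_div_criticalAngle (hx0 : 0 < x0) :
    MonotoneOn (fun L ↦ (2 * L + x0) * (Real.cot (criticalAngle x0 L) / criticalAngle x0 L))
      (Ici (3 * x0)) := by
  intro L hL M hM hLM
  rw [mem_Ici] at hL hM
  have hangle : criticalAngle x0 M ≤ criticalAngle x0 L :=
    (strictAntiOn_criticalAngle hx0).antitoneOn (mem_Ioi.2 (by linarith))
      (mem_Ioi.2 (by linarith)) hLM
  exact mul_le_mul (by linarith)
    (antitoneOn_cot_div_self (criticalAngle_mem_Ioc hx0 hM) (criticalAngle_mem_Ioc hx0 hL) hangle)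
    (cot_div_criticalAngle_nonneg hx0 hL) (by linarith)

lemma strictMonoOn_A0 (hx0 : 0 < x0) : StrictMonoOn (A0 x0) (Ici (3 * x0)) := by
  have hsum := (strictMonoOn_div_sin_criticalAngle_sq hx0).add_monotone
    (monotoneOn_mul_cot_div_criticalAngle hx0)
  intro L hL M hM hLM
  have hL0 : 0 < L := by linarith [mem_Ici.1 hL]
  rw [A0_eq_criticalAngle hx0 hL0, A0_eq_criticalAngle hx0 (hL0.trans hLM)]
  exact mul_lt_mul_of_pos_left (hsum hL hM hLM) (by positivity)

lemma continuousOn_A0 (hx0 : 0 < x0) : ContinuousOn (A0 x0) (Ioi 0) := by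
  have hangle : ContinuousOn (criticalAngle x0) (Ioi 0) :=
    continuousOn_criticalAngle.mono (Ioi_subset_Ioi (by linarith))
  have hangle_ne : ∀ L ∈ Ioi (0 : ℝ), criticalAngle x0 L ≠ 0 := fun _ hL ↦
    (criticalAngle_mem_Ioo hx0 hL).1.ne'
  have hsin_ne : ∀ L ∈ Ioi (0 : ℝ), sin (criticalAngle x0 L) ≠ 0 := fun _ hL ↦
    (sin_criticalAngle_pos hx0 hL).ne'
  have hsin_sq_ne : ∀ L ∈ Ioi (0 : ℝ), sin (criticalAngle x0 L) ^ 2 ≠ 0 := fun L hL ↦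
    pow_ne_zero 2 (hsin_ne L hL)
  refine ContinuousOn.congr ?_ fun L hL ↦ A0_eq_criticalAngle hx0 hL
  simp only [Real.cot_eq_cos_div_sin]
  fun_prop (disch := assumption)

lemma A0_three_mul (hx0 : 0 < x0) : A0 x0 (3 * x0) = 3 / 2 * π * x0 ^ 2 := by
  rw [A0_eq_criticalAngle hx0 (by positivity), criticalAngle_three_mul hx0.ne',
    Real.cot_eq_cos_div_sin, sin_pi_div_two, cos_pi_div_two]
  ring

lemma mul_le_A0 (hx0 : 0 < x0) {L : ℝ} (hL : 3 * x0 ≤ L) : π * x0 / 2 * L ≤ A0 x0 L := by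
  have hL0 : 0 < L := by linarith
  have hsin : 0 < sin (criticalAngle x0 L) := sin_criticalAngle_pos hx0 hL0
  rw [A0_eq_criticalAngle hx0 hL0]
  gcongr
  calc
    L ≤ L / sin (criticalAngle x0 L) ^ 2 :=
      le_div_self hL0.le (by positivity) (sin_sq_le_one _)
    _ ≤ _ := le_add_of_nonneg_right
      (mul_nonneg (by positivity) (cot_div_criticalAngle_nonneg hx0 hL))

lemma tendsto_A0_atTop (hx0 : 0 < x0) : Tendsto (A0 x0) atTop atTop := by
  have hslope : 0 < π * x0 / 2 := by positivity
  refine tendsto_atTop_mono' atTop ?_ (tendsto_id.const_mul_atTop hslope)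
  filter_upwards [eventually_ge_atTop (3 * x0)] with L hL
  exact mul_le_A0 hx0 hL

end

/-- `L ↦ A₀(x₀,L)` is strictly increasing on `(3x₀,∞)`, tends to `(3/2)πx₀²`
as `L → 3x₀⁺`, and hence every area `A* > (3/2)πx₀²` is attained at a unique `L > 3x₀`. -/
theorem statement3 (x0 : ℝ) (hx0 : 0 < x0) :
    StrictMonoOn (A0 x0) (Set.Ioi (3 * x0)) ∧
    Filter.Tendsto (A0 x0) (nhdsWithin (3 * x0) (Set.Ioi (3 * x0)))
      (nhds (3 / 2 * π * x0 ^ 2)) ∧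
    ∀ Astar : ℝ, 3 / 2 * π * x0 ^ 2 < Astar →
      ∃! L : ℝ, L ∈ Set.Ioi (3 * x0) ∧ A0 x0 L = Astar := by
  have hmono : StrictMonoOn (A0 x0) (Ioi (3 * x0)) :=
    (strictMonoOn_A0 hx0).mono Ioi_subset_Ici_self
  have hcont : ContinuousOn (A0 x0) (Ici (3 * x0)) :=
    (continuousOn_A0 hx0).mono (Ici_subset_Ioi.2 (by positivity))
  rw [← A0_three_mul hx0]
  refine ⟨hmono, (hcont _ self_mem_Ici).mono Ioi_subset_Ici_self, fun Astar hAstar ↦ ?_⟩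
  obtain ⟨L, hL, hLA⟩ := intermediate_value_Ioi hcont (tendsto_A0_atTop hx0) hAstar
  exact ⟨L, ⟨hL, hLA⟩, fun M ⟨hM, hMA⟩ ↦ hmono.injOn hM hL (hMA.trans hLA.symm)⟩
end

section
/- Let L > 0 and let γ ∈ C^∞([0,2L], ℝ²) be parametrized by arc-length with curvature H(s) = ⟨γ̇(s), γ̈(s)^⊥⟩ > 0 for all s. Let X ∈ C^∞([0,2L], ℝ²) with X(0) = X(2L) = 0, and set N(s) = γ̇(s)^⊥. Define, for t near 0, F(t) = ∫₀^{2L} |γ̇(s)+tẊ(s)|⁴ / ⟨γ̇(s)+tẊ(s), (γ̈(s)+tẌ(s))^⊥⟩ ds (well defined for |t| small since the denominator is positive at t = 0). Then F is differentiable at t = 0 and F'(0) = ∫₀^{2L} ((d²/ds²)(H(s)⁻²) + 2)·⟨X(s), N(s)⟩ ds + H(2L)⁻²·(d/ds)⟨X,N⟩(2L) − H(0)⁻²·(d/ds)⟨X,N⟩(0). -/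
open Real Set

/-- curvature `H = ⟨γ̇, γ̈^⊥⟩ = u̇ v̈ − v̇ ü` of an arc-length plane curve `γ = (u, v)`,
where `(a₁,a₂)^⊥ = (a₂,−a₁)`. -/
noncomputable def Hgen (u v : ℝ → ℝ) (s : ℝ) : ℝ :=
  deriv u s * deriv (deriv v) s - deriv v s * deriv (deriv u) s

/-!
Write `T = γ̇`, `N = T^⊥`, `φ = ⟨X, N⟩` and `τ = ⟨X, T⟩`. The `t`-derivative of the integrand at
`t = 0` is `4 ⟨T, Ẋ⟩ / H - (⟨Ẋ, γ̈^⊥⟩ + ⟨T, Ẍ^⊥⟩) / H²`. The Frenet equations `Ṫ = -H N`, `Ṅ = H T`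
turn it into `H⁻² φ̈ + 2 φ + (τ / H)˙`: up to a total derivative only the normal part of `X`
contributes. Two integrations by parts move both derivatives from `φ` to `H⁻²`, and of the
resulting boundary terms `H⁻² φ̇ - (H⁻²)˙ φ + τ / H` only the first survives when `X` vanishes at
the endpoints.
-/

open Filter Function MeasureTheory Topology

section Integrals

theorem hasDerivAt_intervalIntegral_of_continuousOn {𝕜 E : Type*} [RCLike 𝕜]
    [NormedAddCommGroup E] [NormedSpace ℝ E] [NormedSpace 𝕜 E]
    {μ : Measure ℝ} [IsLocallyFiniteMeasure μ] {F F' : 𝕜 → ℝ → E} {U : Set (𝕜 × ℝ)}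
    {t₀ : 𝕜} {a b : ℝ} (hU : IsOpen U) (hmem : ∀ s ∈ uIcc a b, (t₀, s) ∈ U)
    (hF : ContinuousOn (uncurry F) U) (hF' : ContinuousOn (uncurry F') U)
    (hderiv : ∀ t s, (t, s) ∈ U → HasDerivAt (fun t => F t s) (F' t s) t) :
    HasDerivAt (fun t => ∫ s in a..b, F t s ∂μ) (∫ s in a..b, F' t₀ s ∂μ) t₀ := by
  obtain ⟨V, W, hV, -, ht₀V, hW, hVW⟩ := generalized_tube_lemma (isCompact_singleton (x := t₀))
    (isCompact_uIcc (a := a) (b := b)) hU (by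
      rintro ⟨t, s⟩ ⟨rfl, hs⟩
      exact hmem s hs)
  obtain ⟨K, hK, ht₀K, hKV⟩ := exists_compact_subset hV (ht₀V rfl)
  have hKnhds : K ∈ 𝓝 t₀ := mem_interior_iff_mem_nhds.1 ht₀K
  have hKU : K ×ˢ uIcc a b ⊆ U := (prod_mono hKV hW).trans hVW
  obtain ⟨C, hC⟩ := (hK.prod isCompact_uIcc).exists_bound_of_continuousOn (hF'.mono hKU)
  have integrable_slice {G : 𝕜 → ℝ → E} (hG : ContinuousOn (uncurry G) U) {t : 𝕜} (ht : t ∈ K) :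
      IntervalIntegrable (G t) μ a b :=
    (hG.comp (f := fun s => (t, s)) (by fun_prop) fun s hs => hKU ⟨ht, hs⟩).intervalIntegrable
  have ht₀ : t₀ ∈ K := interior_subset ht₀K
  refine (intervalIntegral.hasDerivAt_integral_of_dominated_loc_of_deriv_le
    (bound := fun _ => C) hKnhds ?_ (integrable_slice hF ht₀)
    (integrable_slice hF' ht₀).def'.aestronglyMeasurable ?_ intervalIntegrable_const ?_).2
  · filter_upwards [hKnhds] with t ht using (integrable_slice hF ht).def'.aestronglyMeasurable
  · exact .of_forall fun s hs t ht => hC (t, s) ⟨ht, uIoc_subset_uIcc hs⟩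
  · exact .of_forall fun s hs t ht => hderiv t s (hKU ⟨ht, uIoc_subset_uIcc hs⟩)

theorem continuousOn_deriv_of_contDiffAt {E : Type*} [NormedAddCommGroup E] [NormedSpace ℝ E]
    {f : ℝ → E} {S : Set ℝ} (hf : ∀ s ∈ S, ContDiffAt ℝ 1 f s) : ContinuousOn (deriv f) S :=
  fun s hs => ((hf s hs).derivWithin (m := 0) (by norm_num)).continuousAt.continuousWithinAt

theorem contDiffAt_deriv_of_contDiffAt_two {E : Type*} [NormedAddCommGroup E] [NormedSpace ℝ E]
    {f : ℝ → E} {s : ℝ} (hf : ContDiffAt ℝ 2 f s) : ContDiffAt ℝ 1 (deriv f) s :=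
  hf.derivWithin (by norm_num)

theorem continuousOn_deriv_deriv_of_contDiffAt {E : Type*} [NormedAddCommGroup E]
    [NormedSpace ℝ E] {f : ℝ → E} {S : Set ℝ} (hf : ∀ s ∈ S, ContDiffAt ℝ 2 f s) :
    ContinuousOn (deriv (deriv f)) S :=
  continuousOn_deriv_of_contDiffAt fun s hs => contDiffAt_deriv_of_contDiffAt_two (hf s hs)

theorem integral_mul_deriv_deriv {A : Type*} [NormedRing A] [NormedAlgebra ℝ A] [CompleteSpace A]
    {f g : ℝ → A} {a b : ℝ} (hf : ∀ s ∈ uIcc a b, ContDiffAt ℝ 2 f s)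
    (hg : ∀ s ∈ uIcc a b, ContDiffAt ℝ 2 g s) :
    ∫ s in a..b, f s * deriv (deriv g) s =
      (∫ s in a..b, deriv (deriv f) s * g s) +
        ((f b * deriv g b - deriv f b * g b) - (f a * deriv g a - deriv f a * g a)) := by
  have hasDerivAt_deriv {h : ℝ → A} (hh : ∀ s ∈ uIcc a b, ContDiffAt ℝ 2 h s) :
      ∀ s ∈ uIcc a b, HasDerivAt h (deriv h s) s := fun s hs =>
    ((hh s hs).differentiableAt two_ne_zero).hasDerivAt
  have hasDerivAt_deriv_deriv {h : ℝ → A} (hh : ∀ s ∈ uIcc a b, ContDiffAt ℝ 2 h s) :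
      ∀ s ∈ uIcc a b, HasDerivAt (deriv h) (deriv (deriv h) s) s := fun s hs =>
    ((contDiffAt_deriv_of_contDiffAt_two (hh s hs)).differentiableAt one_ne_zero).hasDerivAt
  have integrable_deriv {h : ℝ → A} (hh : ∀ s ∈ uIcc a b, ContDiffAt ℝ 2 h s) :
      IntervalIntegrable (deriv h) volume a b :=
    (continuousOn_deriv_of_contDiffAt fun s hs =>
      (hh s hs).of_le one_le_two).intervalIntegrable
  have integrable_deriv_deriv {h : ℝ → A} (hh : ∀ s ∈ uIcc a b, ContDiffAt ℝ 2 h s) :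
      IntervalIntegrable (deriv (deriv h)) volume a b :=
    (continuousOn_deriv_deriv_of_contDiffAt hh).intervalIntegrable
  rw [intervalIntegral.integral_mul_deriv_eq_deriv_mul (hasDerivAt_deriv hf)
      (hasDerivAt_deriv_deriv hg) (integrable_deriv hf) (integrable_deriv_deriv hg),
    intervalIntegral.integral_mul_deriv_eq_deriv_mul (hasDerivAt_deriv_deriv hf)
      (hasDerivAt_deriv hg) (integrable_deriv_deriv hf) (integrable_deriv hg)]
  abel

theorem integral_mul_deriv_deriv_add_mul_add_deriv {A : Type*} [NormedRing A] [NormedAlgebra ℝ A]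
    [CompleteSpace A] {w φ g : ℝ → A} {a b : ℝ} (c : A)
    (hw : ∀ s ∈ uIcc a b, ContDiffAt ℝ 2 w s) (hφ : ∀ s ∈ uIcc a b, ContDiffAt ℝ 2 φ s)
    (hg : ∀ s ∈ uIcc a b, ContDiffAt ℝ 1 g s) :
    ∫ s in a..b, (w s * deriv (deriv φ) s + c * φ s + deriv g s) =
      (∫ s in a..b, (deriv (deriv w) s + c) * φ s) +
        ((w b * deriv φ b - deriv w b * φ b + g b) -
          (w a * deriv φ a - deriv w a * φ a + g a)) := by
  have cw : ContinuousOn w (uIcc a b) := fun s hs => (hw s hs).continuousAt.continuousWithinAt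
  have cφ : ContinuousOn φ (uIcc a b) := fun s hs => (hφ s hs).continuousAt.continuousWithinAt
  have hwφ'' : IntervalIntegrable (fun s => w s * deriv (deriv φ) s) volume a b :=
    (cw.mul (continuousOn_deriv_deriv_of_contDiffAt hφ)).intervalIntegrable
  have hw''φ : IntervalIntegrable (fun s => deriv (deriv w) s * φ s) volume a b :=
    ((continuousOn_deriv_deriv_of_contDiffAt hw).mul cφ).intervalIntegrable
  have hcφ : IntervalIntegrable (fun s => c * φ s) volume a b :=
    (continuousOn_const.mul cφ).intervalIntegrable
  have hg' : IntervalIntegrable (deriv g) volume a b :=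
    (continuousOn_deriv_of_contDiffAt hg).intervalIntegrable
  simp only [add_mul]
  rw [intervalIntegral.integral_add (hwφ''.add hcφ) hg', intervalIntegral.integral_add hwφ'' hcφ,
    intervalIntegral.integral_add hw''φ hcφ, integral_mul_deriv_deriv hw hφ,
    intervalIntegral.integral_deriv_eq_sub
      (fun s hs => (hg s hs).differentiableAt one_ne_zero) hg']
  abel

end Integrals

/-- The component `⟨X, N⟩` of the field `X = (p, q)` along the normal `N = γ̇^⊥ = (v̇, -u̇)` of the
curve `γ = (u, v)`. -/
noncomputable def normalComponent (u v p q : ℝ → ℝ) (s : ℝ) : ℝ :=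
  p s * deriv v s - q s * deriv u s

/-- The component `⟨X, γ̇⟩` of the field `X = (p, q)` along the velocity of the curve
`γ = (u, v)`. -/
noncomputable def tangentialComponent (u v p q : ℝ → ℝ) (s : ℝ) : ℝ :=
  p s * deriv u s + q s * deriv v s

/-- The denominator `⟨γ̇_t, γ̈_t^⊥⟩` of the inverse curvature of `γ_t = γ + tX`, where `γ = (u, v)`
and `X = (p, q)`. -/
noncomputable def perturbedCurvature (u v p q : ℝ → ℝ) (t s : ℝ) : ℝ :=
  (deriv u s + t * deriv p s) * (deriv (deriv v) s + t * deriv (deriv q) s) -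
    (deriv v s + t * deriv q s) * (deriv (deriv u) s + t * deriv (deriv p) s)

/-- The derivative in `t` of `perturbedCurvature u v p q t s`. -/
noncomputable def perturbedCurvatureDeriv (u v p q : ℝ → ℝ) (t s : ℝ) : ℝ :=
  deriv p s * (deriv (deriv v) s + t * deriv (deriv q) s) +
      (deriv u s + t * deriv p s) * deriv (deriv q) s -
    (deriv q s * (deriv (deriv u) s + t * deriv (deriv p) s) +
      (deriv v s + t * deriv q s) * deriv (deriv p) s)

/-- The integrand `|γ̇_t|⁴ / ⟨γ̇_t, γ̈_t^⊥⟩` of the total inverse curvature of `γ_t = γ + tX`, where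
`γ = (u, v)` and `X = (p, q)`. -/
noncomputable def inverseCurvatureDensity (u v p q : ℝ → ℝ) (t s : ℝ) : ℝ :=
  ((deriv u s + t * deriv p s) ^ 2 + (deriv v s + t * deriv q s) ^ 2) ^ 2 /
    perturbedCurvature u v p q t s

/-- The derivative in `t` of `inverseCurvatureDensity u v p q t s`, given by the quotient rule
wherever the denominator does not vanish. -/
noncomputable def inverseCurvatureDensityDeriv (u v p q : ℝ → ℝ) (t s : ℝ) : ℝ :=
  (4 * ((deriv u s + t * deriv p s) ^ 2 + (deriv v s + t * deriv q s) ^ 2) *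
        ((deriv u s + t * deriv p s) * deriv p s + (deriv v s + t * deriv q s) * deriv q s) *
        perturbedCurvature u v p q t s -
      ((deriv u s + t * deriv p s) ^ 2 + (deriv v s + t * deriv q s) ^ 2) ^ 2 *
        perturbedCurvatureDeriv u v p q t s) /
    perturbedCurvature u v p q t s ^ 2

/-- The boundary expression `H⁻² (d/ds)⟨X, N⟩ - (H⁻²)˙ ⟨X, N⟩ + ⟨X, γ̇⟩ / H` of the first variation
of the total inverse curvature of `γ = (u, v)` in the direction `X = (p, q)`. -/
noncomputable def firstVariationBoundary (u v p q : ℝ → ℝ) (s : ℝ) : ℝ :=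
  (Hgen u v s ^ 2)⁻¹ * deriv (normalComponent u v p q) s -
    deriv (fun r => (Hgen u v r ^ 2)⁻¹) s * normalComponent u v p q s +
    tangentialComponent u v p q s / Hgen u v s

variable {u v p q : ℝ → ℝ} {s t a b : ℝ}

section DerivativeInParameter

theorem perturbedCurvature_zero : perturbedCurvature u v p q 0 s = Hgen u v s := by
  simp only [perturbedCurvature, Hgen, zero_mul, add_zero]

theorem hasDerivAt_const_add_mul (c d t : ℝ) : HasDerivAt (fun t : ℝ => c + t * d) d t :=
  (hasDerivAt_mul_const d).const_add c

theorem hasDerivAt_perturbedCurvature :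
    HasDerivAt (fun t => perturbedCurvature u v p q t s) (perturbedCurvatureDeriv u v p q t s) t :=
  ((hasDerivAt_const_add_mul _ _ t).mul (hasDerivAt_const_add_mul _ _ t)).sub
    ((hasDerivAt_const_add_mul _ _ t).mul (hasDerivAt_const_add_mul _ _ t))

theorem hasDerivAt_inverseCurvatureDensity (h : perturbedCurvature u v p q t s ≠ 0) :
    HasDerivAt (fun t => inverseCurvatureDensity u v p q t s)
      (inverseCurvatureDensityDeriv u v p q t s) t := by
  have hspeed := ((((hasDerivAt_const_add_mul (deriv u s) (deriv p s) t).pow 2).add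
    ((hasDerivAt_const_add_mul (deriv v s) (deriv q s) t).pow 2)).pow 2)
  refine (hspeed.div hasDerivAt_perturbedCurvature h).congr_deriv ?_
  simp only [inverseCurvatureDensityDeriv, Pi.add_apply, Pi.pow_apply]
  ring

theorem hasDerivAt_integral_inverseCurvatureDensity
    (hu : ContDiff ℝ 2 u) (hv : ContDiff ℝ 2 v) (hp : ContDiff ℝ 2 p) (hq : ContDiff ℝ 2 q)
    (h : ∀ s ∈ uIcc a b, perturbedCurvature u v p q t s ≠ 0) :
    HasDerivAt (fun t => ∫ s in a..b, inverseCurvatureDensity u v p q t s)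
      (∫ s in a..b, inverseCurvatureDensityDeriv u v p q t s) t := by
  have continuous_deriv {f : ℝ → ℝ} (hf : ContDiff ℝ 2 f) :
      Continuous (deriv f) ∧ Continuous (deriv (deriv f)) :=
    have hf' : ContDiff ℝ 1 (deriv f) := hf.deriv'
    ⟨hf'.continuous, hf'.continuous_deriv_one⟩
  obtain ⟨hu₁, hu₂⟩ := continuous_deriv hu
  obtain ⟨hv₁, hv₂⟩ := continuous_deriv hv
  obtain ⟨hp₁, hp₂⟩ := continuous_deriv hp
  obtain ⟨hq₁, hq₂⟩ := continuous_deriv hq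
  have hD : Continuous (uncurry (perturbedCurvature u v p q)) := by
    unfold uncurry perturbedCurvature
    fun_prop
  have hD' : Continuous (uncurry (perturbedCurvatureDeriv u v p q)) := by
    unfold uncurry perturbedCurvatureDeriv
    fun_prop
  simp only [uncurry_def] at hD hD'
  refine hasDerivAt_intervalIntegral_of_continuousOn (isOpen_ne_fun hD continuous_const) h
    ?_ ?_ fun t s hts => hasDerivAt_inverseCurvatureDensity hts
  · exact ContinuousOn.div (by fun_prop) hD.continuousOn fun _ hx => hx
  · exact ContinuousOn.div (by fun_prop) (hD.pow 2).continuousOn fun _ hx => pow_ne_zero 2 hx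

end DerivativeInParameter

section Frenet

theorem contDiff_hgen {n : WithTop ℕ∞} (hu : ContDiff ℝ (n + 2) u) (hv : ContDiff ℝ (n + 2) v) :
    ContDiff ℝ n (Hgen u v) := by
  have contDiff_deriv {f : ℝ → ℝ} (hf : ContDiff ℝ (n + 2) f) :
      ContDiff ℝ n (deriv f) ∧ ContDiff ℝ n (deriv (deriv f)) := by
    have hf' : ContDiff ℝ (n + 1) (deriv f) := by
      refine ContDiff.deriv' ?_
      rwa [add_assoc, one_add_one_eq_two]
    exact ⟨hf'.of_le le_self_add, hf'.deriv'⟩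
  obtain ⟨hu₁, hu₂⟩ := contDiff_deriv hu
  obtain ⟨hv₁, hv₂⟩ := contDiff_deriv hv
  exact (hu₁.mul hv₂).sub (hv₁.mul hu₂)

theorem velocity_orthogonal_acceleration
    (hu : DifferentiableAt ℝ (deriv u) s) (hv : DifferentiableAt ℝ (deriv v) s)
    (harc : ∀ᶠ r in 𝓝 s, deriv u r ^ 2 + deriv v r ^ 2 = 1) :
    deriv u s * deriv (deriv u) s + deriv v s * deriv (deriv v) s = 0 := by
  have hconst : HasDerivAt (fun r => deriv u r ^ 2 + deriv v r ^ 2) 0 s :=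
    (hasDerivAt_const s 1).congr_of_eventuallyEq harc
  have huniq := ((hu.hasDerivAt.pow 2).add (hv.hasDerivAt.pow 2)).unique hconst
  norm_num at huniq
  linarith

theorem frenet_equations
    (hu : DifferentiableAt ℝ (deriv u) s) (hv : DifferentiableAt ℝ (deriv v) s)
    (harc : ∀ᶠ r in 𝓝 s, deriv u r ^ 2 + deriv v r ^ 2 = 1) :
    deriv (deriv u) s = -(Hgen u v s * deriv v s) ∧ deriv (deriv v) s = Hgen u v s * deriv u s := by
  have horth := velocity_orthogonal_acceleration hu hv harc
  have hunit := harc.self_of_nhds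
  unfold Hgen
  constructor
  · linear_combination deriv u s * horth - deriv (deriv u) s * hunit
  · linear_combination deriv v s * horth - deriv (deriv v) s * hunit

theorem hasDerivAt_normalComponent
    (hu : DifferentiableAt ℝ (deriv u) s) (hv : DifferentiableAt ℝ (deriv v) s)
    (hp : DifferentiableAt ℝ p s) (hq : DifferentiableAt ℝ q s)
    (harc : ∀ᶠ r in 𝓝 s, deriv u r ^ 2 + deriv v r ^ 2 = 1) :
    HasDerivAt (normalComponent u v p q)
      (normalComponent u v (deriv p) (deriv q) s + Hgen u v s * tangentialComponent u v p q s)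
      s := by
  obtain ⟨hu₂, hv₂⟩ := frenet_equations hu hv harc
  refine ((hp.hasDerivAt.mul hv.hasDerivAt).sub (hq.hasDerivAt.mul hu.hasDerivAt)).congr_deriv ?_
  rw [hu₂, hv₂, normalComponent, tangentialComponent]
  ring

theorem hasDerivAt_tangentialComponent
    (hu : DifferentiableAt ℝ (deriv u) s) (hv : DifferentiableAt ℝ (deriv v) s)
    (hp : DifferentiableAt ℝ p s) (hq : DifferentiableAt ℝ q s)
    (harc : ∀ᶠ r in 𝓝 s, deriv u r ^ 2 + deriv v r ^ 2 = 1) :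
    HasDerivAt (tangentialComponent u v p q)
      (tangentialComponent u v (deriv p) (deriv q) s - Hgen u v s * normalComponent u v p q s)
      s := by
  obtain ⟨hu₂, hv₂⟩ := frenet_equations hu hv harc
  refine ((hp.hasDerivAt.mul hu.hasDerivAt).add (hq.hasDerivAt.mul hv.hasDerivAt)).congr_deriv ?_
  rw [hu₂, hv₂, normalComponent, tangentialComponent]
  ring

theorem deriv_deriv_normalComponent
    (hu : ContDiff ℝ 3 u) (hv : ContDiff ℝ 3 v) (hp : ContDiff ℝ 2 p) (hq : ContDiff ℝ 2 q)
    (harc : ∀ᶠ r in 𝓝 s, deriv u r ^ 2 + deriv v r ^ 2 = 1) :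
    deriv (deriv (normalComponent u v p q)) s =
      normalComponent u v (deriv (deriv p)) (deriv (deriv q)) s +
        2 * Hgen u v s * tangentialComponent u v (deriv p) (deriv q) s +
        deriv (Hgen u v) s * tangentialComponent u v p q s -
        Hgen u v s ^ 2 * normalComponent u v p q s := by
  have du : Differentiable ℝ (deriv u) := (ContDiff.deriv' (n := 2) hu).differentiable (by norm_num)
  have dv : Differentiable ℝ (deriv v) := (ContDiff.deriv' (n := 2) hv).differentiable (by norm_num)
  have dp : Differentiable ℝ p := hp.differentiable (by norm_num)
  have dq : Differentiable ℝ q := hq.differentiable (by norm_num)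
  have dp' : Differentiable ℝ (deriv p) := (ContDiff.deriv' (n := 1) hp).differentiable_one
  have dq' : Differentiable ℝ (deriv q) := (ContDiff.deriv' (n := 1) hq).differentiable_one
  have dH : HasDerivAt (Hgen u v) (deriv (Hgen u v) s) s :=
    ((contDiff_hgen (n := 1) hu hv).differentiable_one s).hasDerivAt
  have hfirst : deriv (normalComponent u v p q) =ᶠ[𝓝 s] fun r =>
      normalComponent u v (deriv p) (deriv q) r + Hgen u v r * tangentialComponent u v p q r := by
    filter_upwards [harc.eventually_nhds] with r hr
    exact (hasDerivAt_normalComponent (du r) (dv r) (dp r) (dq r) hr).deriv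
  have hsecond := (hasDerivAt_normalComponent (du s) (dv s) (dp' s) (dq' s) harc).add
    (dH.mul (hasDerivAt_tangentialComponent (du s) (dv s) (dp s) (dq s) harc))
  rw [(hsecond.congr_of_eventuallyEq hfirst).deriv]
  ring

theorem perturbedCurvatureDeriv_zero
    (hu : DifferentiableAt ℝ (deriv u) s) (hv : DifferentiableAt ℝ (deriv v) s)
    (harc : ∀ᶠ r in 𝓝 s, deriv u r ^ 2 + deriv v r ^ 2 = 1) :
    perturbedCurvatureDeriv u v p q 0 s =
      Hgen u v s * tangentialComponent u v (deriv p) (deriv q) s -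
        normalComponent u v (deriv (deriv p)) (deriv (deriv q)) s := by
  obtain ⟨hu₂, hv₂⟩ := frenet_equations hu hv harc
  simp only [perturbedCurvatureDeriv, tangentialComponent, normalComponent, hu₂, hv₂]
  ring

theorem inverseCurvatureDensityDeriv_zero
    (hu : ContDiff ℝ 3 u) (hv : ContDiff ℝ 3 v) (hp : ContDiff ℝ 2 p) (hq : ContDiff ℝ 2 q)
    (harc : ∀ᶠ r in 𝓝 s, deriv u r ^ 2 + deriv v r ^ 2 = 1) (hH : Hgen u v s ≠ 0) :
    inverseCurvatureDensityDeriv u v p q 0 s =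
      (Hgen u v s ^ 2)⁻¹ * deriv (deriv (normalComponent u v p q)) s +
        2 * normalComponent u v p q s +
        deriv (tangentialComponent u v p q / Hgen u v) s := by
  have du : Differentiable ℝ (deriv u) := (ContDiff.deriv' (n := 2) hu).differentiable (by norm_num)
  have dv : Differentiable ℝ (deriv v) := (ContDiff.deriv' (n := 2) hv).differentiable (by norm_num)
  have dτ := hasDerivAt_tangentialComponent (du s) (dv s) (hp.differentiable (by norm_num) s)
    (hq.differentiable (by norm_num) s) harc
  have dH : HasDerivAt (Hgen u v) (deriv (Hgen u v) s) s :=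
    ((contDiff_hgen (n := 1) hu hv).differentiable_one s).hasDerivAt
  have hdensity : inverseCurvatureDensityDeriv u v p q 0 s =
      (4 * tangentialComponent u v (deriv p) (deriv q) s * Hgen u v s -
        perturbedCurvatureDeriv u v p q 0 s) / Hgen u v s ^ 2 := by
    simp only [inverseCurvatureDensityDeriv, perturbedCurvature_zero, zero_mul, add_zero,
      harc.self_of_nhds, tangentialComponent]
    ring
  rw [hdensity, perturbedCurvatureDeriv_zero (du s) (dv s) harc,
    deriv_deriv_normalComponent hu hv hp hq harc, (dτ.div dH hH).deriv]
  field_simp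
  ring

end Frenet

section FirstVariation

theorem contDiff_normalComponent {n : WithTop ℕ∞}
    (hu : ContDiff ℝ (n + 1) u) (hv : ContDiff ℝ (n + 1) v)
    (hp : ContDiff ℝ n p) (hq : ContDiff ℝ n q) : ContDiff ℝ n (normalComponent u v p q) :=
  (hp.mul hv.deriv').sub (hq.mul hu.deriv')

theorem contDiff_tangentialComponent {n : WithTop ℕ∞}
    (hu : ContDiff ℝ (n + 1) u) (hv : ContDiff ℝ (n + 1) v)
    (hp : ContDiff ℝ n p) (hq : ContDiff ℝ n q) : ContDiff ℝ n (tangentialComponent u v p q) :=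
  (hp.mul hu.deriv').add (hq.mul hv.deriv')

theorem contDiffAt_inv_sq_hgen {n : WithTop ℕ∞}
    (hu : ContDiff ℝ (n + 2) u) (hv : ContDiff ℝ (n + 2) v) (hH : Hgen u v s ≠ 0) :
    ContDiffAt ℝ n (fun r => (Hgen u v r ^ 2)⁻¹) s :=
  ((contDiff_hgen hu hv).pow 2).contDiffAt.inv (pow_ne_zero 2 hH)

theorem firstVariationBoundary_of_eq_zero (hp : p s = 0) (hq : q s = 0) :
    firstVariationBoundary u v p q s =
      (Hgen u v s ^ 2)⁻¹ * deriv (normalComponent u v p q) s := by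
  simp [firstVariationBoundary, normalComponent, tangentialComponent, hp, hq]

theorem integral_inverseCurvatureDensityDeriv_zero
    (hu : ContDiff ℝ 4 u) (hv : ContDiff ℝ 4 v) (hp : ContDiff ℝ 2 p) (hq : ContDiff ℝ 2 q)
    (harc : ∀ s ∈ uIcc a b, deriv u s ^ 2 + deriv v s ^ 2 = 1)
    (hcurv : ∀ s ∈ uIcc a b, Hgen u v s ≠ 0) :
    ∫ s in a..b, inverseCurvatureDensityDeriv u v p q 0 s =
      (∫ s in a..b, (deriv (deriv fun r => (Hgen u v r ^ 2)⁻¹) s + 2) * normalComponent u v p q s) +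
        firstVariationBoundary u v p q b - firstVariationBoundary u v p q a := by
  set w : ℝ → ℝ := fun r => (Hgen u v r ^ 2)⁻¹
  set φ := normalComponent u v p q
  set g := tangentialComponent u v p q / Hgen u v
  have hu₃ : ContDiff ℝ 3 u := hu.of_le (by norm_num)
  have hv₃ : ContDiff ℝ 3 v := hv.of_le (by norm_num)
  have hw : ∀ s ∈ uIcc a b, ContDiffAt ℝ 2 w s := fun s hs =>
    contDiffAt_inv_sq_hgen (n := 2) hu hv (hcurv s hs)
  have hφ : ContDiff ℝ 2 φ := contDiff_normalComponent hu₃ hv₃ hp hq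
  have hg : ∀ s ∈ uIcc a b, ContDiffAt ℝ 1 g s := fun s hs =>
    (contDiff_tangentialComponent (n := 1) (hu.of_le (by norm_num)) (hv.of_le (by norm_num))
      (hp.of_le (by norm_num)) (hq.of_le (by norm_num))).contDiffAt.div
      (contDiff_hgen hu₃ hv₃).contDiffAt (hcurv s hs)
  have hpointwise : (uIoo a b).EqOn (inverseCurvatureDensityDeriv u v p q 0)
      fun s => w s * deriv (deriv φ) s + 2 * φ s + deriv g s := fun s hs =>
    inverseCurvatureDensityDeriv_zero hu₃ hv₃ hp hq
      (eventually_of_mem (isOpen_Ioo.mem_nhds hs) fun r hr => harc r (uIoo_subset_uIcc_self hr))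
      (hcurv s (uIoo_subset_uIcc_self hs))
  rw [intervalIntegral.integral_congr_uIoo hpointwise,
    integral_mul_deriv_deriv_add_mul_add_deriv 2 hw (fun s _ => hφ.contDiffAt) hg]
  simp only [firstVariationBoundary, add_sub_assoc]
  rfl

theorem statement7_general
    (hu : ContDiff ℝ 4 u) (hv : ContDiff ℝ 4 v) (hp : ContDiff ℝ 2 p) (hq : ContDiff ℝ 2 q)
    (harc : ∀ s ∈ uIcc a b, deriv u s ^ 2 + deriv v s ^ 2 = 1)
    (hcurv : ∀ s ∈ uIcc a b, Hgen u v s ≠ 0) :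
    HasDerivAt (fun t => ∫ s in a..b, inverseCurvatureDensity u v p q t s)
      ((∫ s in a..b,
          (deriv (deriv fun r => (Hgen u v r ^ 2)⁻¹) s + 2) * normalComponent u v p q s) +
        firstVariationBoundary u v p q b - firstVariationBoundary u v p q a)
      0 := by
  rw [← integral_inverseCurvatureDensityDeriv_zero hu hv hp hq harc hcurv]
  exact hasDerivAt_integral_inverseCurvatureDensity (hu.of_le (by norm_num))
    (hv.of_le (by norm_num)) hp hq fun s hs => perturbedCurvature_zero.trans_ne (hcurv s hs)

end FirstVariation

/-- first variation of the total inverse curvature.  Here `γ = (u,v)` is a smooth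
arc-length curve with positive curvature, `X = (p,q)` vanishes at the endpoints,
`N = γ̇^⊥ = (v̇,−u̇)` so that `⟨X,N⟩ = p v̇ − q u̇`, and
`F(t) = ∫₀^{2L} |γ̇+tẊ|⁴ / ⟨γ̇+tẊ, (γ̈+tẌ)^⊥⟩ ds`. -/
theorem statement7 (L : ℝ) (hL : 0 < L) (u v p q : ℝ → ℝ)
    (hu : ContDiff ℝ (⊤ : ℕ∞) u) (hv : ContDiff ℝ (⊤ : ℕ∞) v)
    (hp : ContDiff ℝ (⊤ : ℕ∞) p) (hq : ContDiff ℝ (⊤ : ℕ∞) q)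
    (harc : ∀ s ∈ Set.Icc (0:ℝ) (2 * L), deriv u s ^ 2 + deriv v s ^ 2 = 1)
    (hcurv : ∀ s ∈ Set.Icc (0:ℝ) (2 * L), 0 < Hgen u v s)
    (hp0 : p 0 = 0) (hq0 : q 0 = 0) (hp2 : p (2 * L) = 0) (hq2 : q (2 * L) = 0) :
    HasDerivAt
      (fun t => ∫ s in (0:ℝ)..(2 * L),
        ((deriv u s + t * deriv p s) ^ 2 + (deriv v s + t * deriv q s) ^ 2) ^ 2 /
          ((deriv u s + t * deriv p s) * (deriv (deriv v) s + t * deriv (deriv q) s) -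
            (deriv v s + t * deriv q s) * (deriv (deriv u) s + t * deriv (deriv p) s)))
      ((∫ s in (0:ℝ)..(2 * L),
          (deriv (deriv fun r => (Hgen u v r ^ 2)⁻¹) s + 2) *
            (p s * deriv v s - q s * deriv u s)) +
        (Hgen u v (2 * L) ^ 2)⁻¹ *
          deriv (fun r => p r * deriv v r - q r * deriv u r) (2 * L) -
        (Hgen u v 0 ^ 2)⁻¹ * deriv (fun r => p r * deriv v r - q r * deriv u r) 0)
      0 := by
  have hI : uIcc 0 (2 * L) = Icc 0 (2 * L) := uIcc_of_le (by positivity)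
  have hgeneral := statement7_general (contDiff_infty.1 hu 4) (contDiff_infty.1 hv 4)
    (contDiff_infty.1 hp 2) (contDiff_infty.1 hq 2) (hI ▸ harc) (hI ▸ fun s hs => (hcurv s hs).ne')
  rwa [firstVariationBoundary_of_eq_zero hp0 hq0, firstVariationBoundary_of_eq_zero hp2 hq2]
    at hgeneral
end
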